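/- Let h ≥ 3 and k ≥ 3h+3 be positive integers, and let A = [0,k+1] \ {x, x+2} where x ∈ [1,k-2]. Then: (i) if x ∈ [1,h-2], then |h^∧A| = hk - h² + 2x + 2; (ii) if x ∈ [k-h+1,k-2], then |h^∧A| = (h+2)k - h² - 2x; (iii) if x ∈ {h-1, k-h}, then |h^∧A| = hk - h² + 2h - 1; (iv) if x ∈ {h, k-h-1}, then |h^∧A| = hk - h² + 2h; (v) if x ∈ [h+1,k-h-2], then |h^∧A| = hk - h² + 2h + 1. -/

import Mathlib

open Finset

/-- The restricted `h`-fold sumset: all sums of `h` pairwise distinct elements of `A`. -/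
def restrictedSumset (h : ℕ) (A : Finset ℤ) : Finset ℤ :=
  (A.powersetCard h).image fun S => S.sum id

/-!
A sum of `h` elements of `A = [0, k + 1] \ {x, x + 2}` can be raised by one either by moving a
single summand up by one, or by making one summand jump over a hole (`x - 1 ↦ x + 1` or
`x + 1 ↦ x + 3`) while another one moves down by one. For `h ≥ 2` and `x ≤ k - h - 2`, an `h`-subset
admitting no such move is the set of the `h` largest elements, or else `[0, x - 1]` or
`[0, x - 1] ∪ {x + 1}`. A set of the last two kinds has `h` elements only if `x = h` or `x = h - 1`;
it is then the set of the `h` smallest elements, and every other sum exceeds the smallest one by at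
least two. So the sumset is the full interval between its extreme sums, except that the smallest sum
plus one is missing when `x ∈ {h - 1, h}`. The reflection `y ↦ k + 1 - y` exchanges `x` and
`k - 1 - x` and yields the remaining cases.
-/

section Intervals

theorem Icc_subset_of_succ_mem {S : Finset ℤ} {a b : ℤ} (ha : a ∈ S)
    (hsucc : ∀ y ∈ S, a ≤ y → y < b → y + 1 ∈ S) : Icc a b ⊆ S := by
  intro y hy
  obtain ⟨hay, hyb⟩ := mem_Icc.1 hy
  clear hy
  induction y, hay using Int.leInduction with
  | base => exact ha
  | succ n hn ih => exact hsucc n (ih (by lia)) hn (by lia)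

theorem Icc_subset_of_pred_mem {S : Finset ℤ} {a b : ℤ} (hb : b ∈ S)
    (hpred : ∀ y ∈ S, a < y → y ≤ b → y - 1 ∈ S) : Icc a b ⊆ S := by
  intro y hy
  obtain ⟨hay, hyb⟩ := mem_Icc.1 hy
  clear hy
  induction y, hyb using Int.leInductionDown with
  | base => exact hb
  | pred n hn ih => exact hpred n (ih (by lia)) (by lia) hn

theorem eq_Icc_of_succ_mem {S : Finset ℤ} {a b : ℤ} (ha : a ∈ S) (hS : S ⊆ Icc a b)
    (hsucc : ∀ y ∈ S, y ≠ b → y + 1 ∈ S) : S = Icc a b :=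
  hS.antisymm (Icc_subset_of_succ_mem ha fun y hy _ hyb => hsucc y hy hyb.ne)

theorem eq_Ico_sub_card_of_succ_mem {S : Finset ℤ} {b : ℤ} (hb : ∀ y ∈ S, y < b)
    (hsucc : ∀ y ∈ S, y + 1 < b → y + 1 ∈ S) : S = Ico (b - #S) b := by
  obtain rfl | hne := S.eq_empty_or_nonempty
  · simp
  have hmin_lt := hb _ (S.min'_mem hne)
  have hS : S = Icc (S.min' hne) (b - 1) :=
    eq_Icc_of_succ_mem (S.min'_mem hne)
      (fun y hy => mem_Icc.2 ⟨S.min'_le y hy, by have := hb y hy; lia⟩)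
      (fun y hy hyb => hsucc y hy (by have := hb y hy; lia))
  have hcard : (#S : ℤ) = b - S.min' hne := by
    rw [congrArg card hS, Int.card_Icc]
    lia
  rw [hcard, sub_sub_cancel]
  exact hS.trans (Icc_sub_one_right_eq_Ico _ _)

theorem two_mul_sum_Ico {a b : ℤ} (hab : a ≤ b) : 2 * ∑ i ∈ Ico a b, i = (b - a) * (a + b - 1) := by
  induction b, hab using Int.leInduction with
  | base => simp
  | succ n hn ih =>
    rw [← insert_Ico_right_eq_Ico_add_one hn, sum_insert right_notMem_Ico, mul_add, ih]
    ring

end Intervals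

theorem sum_add_card_sdiff_nsmul_le_sum {α : Type*} [AddCommMonoid α] [PartialOrder α]
    [IsOrderedAddMonoid α] [DecidableEq α] {S T : Finset α} {d : α} (hcard : #S = #T)
    (hle : ∀ y ∈ S \ T, ∀ z ∈ T \ S, y + d ≤ z) :
    ∑ i ∈ S, i + #(S \ T) • d ≤ ∑ i ∈ T, i := by
  let e : ↥(S \ T) ≃ ↥(T \ S) := equivOfCardEq (card_sdiff_comm hcard)
  have hsdiff : ∑ i ∈ S \ T, i + #(S \ T) • d ≤ ∑ i ∈ T \ S, i := calc
    ∑ i ∈ S \ T, i + #(S \ T) • d = ∑ i : ↥(S \ T), (i + d : α) := by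
      rw [sum_coe_sort (S \ T) (· + d), sum_add_distrib, sum_const]
    _ ≤ ∑ i : ↥(S \ T), (e i : α) := sum_le_sum fun i _ => hle i i.2 (e i) (e i).2
    _ = ∑ i ∈ T \ S, i := by rw [e.sum_comp (fun i => (i : α)), sum_coe_sort (T \ S) fun i => i]
  calc
    ∑ i ∈ S, i + #(S \ T) • d = ∑ i ∈ T ∩ S, i + (∑ i ∈ S \ T, i + #(S \ T) • d) := by
      rw [← sum_inter_add_sum_sdiff S T, inter_comm, add_assoc]
    _ ≤ ∑ i ∈ T ∩ S, i + ∑ i ∈ T \ S, i := by gcongr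
    _ = ∑ i ∈ T, i := sum_inter_add_sum_sdiff T S _

section RestrictedSumset

variable {h : ℕ} {A S M T : Finset ℤ} {s : ℤ}

theorem mem_restrictedSumset :
    s ∈ restrictedSumset h A ↔ ∃ S ⊆ A, #S = h ∧ ∑ i ∈ S, i = s := by
  simp [restrictedSumset, mem_powersetCard, and_assoc]

theorem sum_mem_restrictedSumset (hS : S ⊆ A) : ∑ i ∈ S, i ∈ restrictedSumset #S A :=
  mem_restrictedSumset.2 ⟨S, hS, rfl, rfl⟩

theorem sum_sub_add_mem_restrictedSumset {P Q : Finset ℤ} (hS : S ⊆ A) (hP : P ⊆ S) (hQ : Q ⊆ A)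
    (hQS : Disjoint Q S) (hcard : #P = #Q) :
    ∑ i ∈ S, i - ∑ i ∈ P, i + ∑ i ∈ Q, i ∈ restrictedSumset #S A := by
  have hdisj : Disjoint (S \ P) Q := hQS.symm.mono_left sdiff_subset
  refine mem_restrictedSumset.2 ⟨S \ P ∪ Q, union_subset (sdiff_subset.trans hS) hQ, ?_, ?_⟩
  · rw [card_union_of_disjoint hdisj, ← hcard, card_sdiff_add_card_eq_card hP]
  · rw [sum_union hdisj, sum_sdiff_eq_sub hP]

theorem restrictedSumset_image_const_sub (h : ℕ) (A : Finset ℤ) (c : ℤ) :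
    restrictedSumset h (A.image (c - ·)) = (restrictedSumset h A).image (h * c - ·) := by
  have hinj : Function.Injective (c - · : ℤ → ℤ) := sub_right_injective
  have hsum (S : Finset ℤ) : ∑ i ∈ S.image (c - ·), i = #S * c - ∑ i ∈ S, i := by
    rw [sum_image hinj.injOn, sum_sub_distrib, sum_const, nsmul_eq_mul]
  ext s
  simp only [mem_image, mem_restrictedSumset]
  constructor
  · rintro ⟨T, hT, rfl, rfl⟩
    obtain ⟨S, hS, rfl⟩ := subset_image_iff.1 hT
    exact ⟨_, ⟨S, hS, (card_image_of_injective S hinj).symm, rfl⟩,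
      by rw [hsum, card_image_of_injective S hinj]⟩
  · rintro ⟨_, ⟨S, hS, rfl, rfl⟩, rfl⟩
    exact ⟨S.image (c - ·), image_subset_image hS, card_image_of_injective S hinj, hsum S⟩

theorem card_restrictedSumset_image_const_sub (h : ℕ) (A : Finset ℤ) (c : ℤ) :
    #(restrictedSumset h (A.image (c - ·))) = #(restrictedSumset h A) := by
  rw [restrictedSumset_image_const_sub, card_image_of_injective _ sub_right_injective]

theorem sum_le_of_mem_restrictedSumset (hM : ∀ y ∈ M, ∀ z ∈ A \ M, y ≤ z)
    (hs : s ∈ restrictedSumset #M A) : ∑ i ∈ M, i ≤ s := by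
  obtain ⟨S, hS, hcard, rfl⟩ := mem_restrictedSumset.1 hs
  simpa using sum_add_card_sdiff_nsmul_le_sum (d := 0) hcard.symm fun y hy z hz => by
    simpa using hM y (mem_sdiff.1 hy).1 z (sdiff_subset_sdiff hS le_rfl hz)

theorem le_sum_of_mem_restrictedSumset (hT : ∀ y ∈ A \ T, ∀ z ∈ T, y ≤ z)
    (hs : s ∈ restrictedSumset #T A) : s ≤ ∑ i ∈ T, i := by
  obtain ⟨S, hS, hcard, rfl⟩ := mem_restrictedSumset.1 hs
  simpa using sum_add_card_sdiff_nsmul_le_sum (d := 0) hcard fun y hy z hz => by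
    simpa using hT y (sdiff_subset_sdiff hS le_rfl hy) z (mem_sdiff.1 hz).1

theorem sum_add_le_of_mem_restrictedSumset_of_ne {d : ℤ} (hd : 0 ≤ d)
    (hM : ∀ y ∈ M, ∀ z ∈ A \ M, y + d ≤ z) (hs : s ∈ restrictedSumset #M A)
    (hne : s ≠ ∑ i ∈ M, i) : ∑ i ∈ M, i + d ≤ s := by
  obtain ⟨S, hS, hcard, rfl⟩ := mem_restrictedSumset.1 hs
  have hle := sum_add_card_sdiff_nsmul_le_sum hcard.symm fun y hy z hz =>
    hM y (mem_sdiff.1 hy).1 z (sdiff_subset_sdiff hS le_rfl hz)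
  have hpos : #(M \ S) ≠ 0 := fun hzero => hne <| by
    rw [eq_of_subset_of_card_le (sdiff_eq_empty_iff_subset.1 (card_eq_zero.1 hzero)) hcard.le]
  calc
    ∑ i ∈ M, i + d ≤ ∑ i ∈ M, i + #(M \ S) • d := by
      gcongr
      exact le_self_nsmul hd hpos
    _ ≤ ∑ i ∈ S, i := hle

end RestrictedSumset

/-- `S` is a subset of `A` whose sum cannot be raised by exactly one, in the sense that no subset
of `A` with as many elements as `S` has that sum. Such sets are the obstructions to a restricted
sumset being an interval. -/
structure IsStuck (A S : Finset ℤ) : Prop where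
  subset : S ⊆ A
  sum_add_one_notMem : ∑ i ∈ S, i + 1 ∉ restrictedSumset #S A

namespace IsStuck

variable {A S : Finset ℤ}

theorem succ_mem (hS : IsStuck A S) {y : ℤ} (hy : y ∈ S) (hyA : y + 1 ∈ A) : y + 1 ∈ S := by
  by_contra hyS
  refine hS.sum_add_one_notMem ?_
  convert sum_sub_add_mem_restrictedSumset (P := {y}) (Q := {y + 1}) hS.subset (by simpa) (by simpa)
    (by simpa) (by simp) using 1
  simp only [sum_singleton]
  ring

theorem pred_mem_of_add_two_notMem (hS : IsStuck A S) {p q : ℤ} (hp : p ∈ S) (hpA : p + 2 ∈ A)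
    (hpS : p + 2 ∉ S) (hq : q ∈ S) (hqA : q - 1 ∈ A) (hqp : q ≠ p) (hqp' : q - 1 ≠ p + 2) :
    q - 1 ∈ S := by
  by_contra hqS
  refine hS.sum_add_one_notMem ?_
  convert sum_sub_add_mem_restrictedSumset (P := {p, q}) (Q := {p + 2, q - 1}) hS.subset
    (by simp [insert_subset_iff, hp, hq]) (by simp [insert_subset_iff, hpA, hqA])
    (by simp [hpS, hqS]) (by rw [card_pair hqp.symm, card_pair hqp'.symm]) using 1
  rw [sum_pair hqp.symm, sum_pair hqp'.symm]
  ring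

end IsStuck

section CardOfIsStuck

variable {A M T : Finset ℤ}

theorem card_restrictedSumset_of_isStuck_imp_eq (hMA : M ⊆ A) (hMT : #M = #T)
    (hM : ∀ y ∈ M, ∀ z ∈ A \ M, y ≤ z) (hT : ∀ y ∈ A \ T, ∀ z ∈ T, y ≤ z)
    (hstuck : ∀ S, IsStuck A S → #S = #T → S = T) :
    (#(restrictedSumset #T A) : ℤ) = ∑ i ∈ T, i - ∑ i ∈ M, i + 1 := by
  have hsum_M : ∑ i ∈ M, i ∈ restrictedSumset #T A := hMT ▸ sum_mem_restrictedSumset hMA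
  have hIcc : restrictedSumset #T A = Icc (∑ i ∈ M, i) (∑ i ∈ T, i) := by
    refine eq_Icc_of_succ_mem hsum_M (fun s hs => mem_Icc.2
      ⟨sum_le_of_mem_restrictedSumset hM (hMT ▸ hs), le_sum_of_mem_restrictedSumset hT hs⟩) ?_
    intro s hs hsT
    obtain ⟨S, hS, hcard, rfl⟩ := mem_restrictedSumset.1 hs
    by_contra hsucc
    exact hsT (by rw [hstuck S ⟨hS, hcard ▸ hsucc⟩ hcard])
  have hle := le_sum_of_mem_restrictedSumset hT hsum_M
  rw [hIcc, Int.card_Icc]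
  lia

theorem card_restrictedSumset_of_isStuck_imp_eq_or_eq {p : ℤ} (hMA : M ⊆ A) (hMT : #M = #T)
    (hM : ∀ y ∈ M, ∀ z ∈ A \ M, y + 2 ≤ z) (hT : ∀ y ∈ A \ T, ∀ z ∈ T, y ≤ z)
    (hp : p ∈ M) (hpA : p + 2 ∈ A \ M) (hstuck : ∀ S, IsStuck A S → #S = #T → S = T ∨ S = M) :
    (#(restrictedSumset #T A) : ℤ) = ∑ i ∈ T, i - ∑ i ∈ M, i := by
  obtain ⟨hpA, hpM⟩ := mem_sdiff.1 hpA
  have hsum_M : ∑ i ∈ M, i ∈ restrictedSumset #T A := hMT ▸ sum_mem_restrictedSumset hMA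
  have hsum_M_add_two : ∑ i ∈ M, i + 2 ∈ restrictedSumset #T A := by
    rw [← hMT]
    convert sum_sub_add_mem_restrictedSumset (P := {p}) (Q := {p + 2}) hMA (by simpa) (by simpa)
      (by simpa) (by simp) using 1
    simp only [sum_singleton]
    ring
  have hIcc : (restrictedSumset #T A).erase (∑ i ∈ M, i) = Icc (∑ i ∈ M, i + 2) (∑ i ∈ T, i) := by
    refine eq_Icc_of_succ_mem (mem_erase.2 ⟨by lia, hsum_M_add_two⟩) (fun s hs => ?_) ?_
    · obtain ⟨hsM, hs⟩ := mem_erase.1 hs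
      exact mem_Icc.2 ⟨sum_add_le_of_mem_restrictedSumset_of_ne zero_le_two hM (hMT ▸ hs) hsM,
        le_sum_of_mem_restrictedSumset hT hs⟩
    intro s hs hsT
    obtain ⟨hsM, hs⟩ := mem_erase.1 hs
    have hMs := sum_add_le_of_mem_restrictedSumset_of_ne zero_le_two hM (hMT ▸ hs) hsM
    obtain ⟨S, hS, hcard, rfl⟩ := mem_restrictedSumset.1 hs
    refine mem_erase.2 ⟨by lia, by_contra fun hsucc => ?_⟩
    obtain rfl | rfl := hstuck S ⟨hS, hcard ▸ hsucc⟩ hcard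
    exacts [hsT rfl, hsM rfl]
  have hle := le_sum_of_mem_restrictedSumset hT hsum_M_add_two
  have hcard := congrArg card hIcc
  have hpos : 0 < #(restrictedSumset #T A) := card_pos.2 ⟨_, hsum_M⟩
  rw [card_erase_of_mem hsum_M, Int.card_Icc] at hcard
  lia

end CardOfIsStuck

/-- The set `A = [0, k + 1] \ {x, x + 2}` of the theorem: an interval with two holes at distance
two. -/
noncomputable def twoHoleInterval (k x : ℤ) : Finset ℤ := Icc 0 (k + 1) \ {x, x + 2}

section TwoHoleInterval

variable {h : ℕ} {k x y p : ℤ} {S : Finset ℤ}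

theorem mem_twoHoleInterval :
    y ∈ twoHoleInterval k x ↔ 0 ≤ y ∧ y ≤ k + 1 ∧ y ≠ x ∧ y ≠ x + 2 := by
  simp [twoHoleInterval, and_assoc]

theorem image_sub_twoHoleInterval (k x : ℤ) :
    (twoHoleInterval k x).image (k + 1 - ·) = twoHoleInterval k (k - 1 - x) := by
  ext y
  simp only [mem_image, mem_twoHoleInterval]
  exact ⟨by lia, fun hy => ⟨k + 1 - y, by lia, by lia⟩⟩

theorem card_restrictedSumset_twoHoleInterval_reflect (h : ℕ) (k x : ℤ) :
    #(restrictedSumset h (twoHoleInterval k (k - 1 - x))) =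
      #(restrictedSumset h (twoHoleInterval k x)) := by
  rw [← image_sub_twoHoleInterval, card_restrictedSumset_image_const_sub]

/-- The `h` largest elements of `twoHoleInterval k x`, provided that `0 ≤ x` and `x + h + 2 ≤ k`. -/
noncomputable def topSegment (h : ℕ) (k : ℤ) : Finset ℤ := Ico (k + 2 - h) (k + 2)

theorem card_topSegment (h : ℕ) (k : ℤ) : #(topSegment h k) = h := by
  simp [topSegment]

theorem two_mul_sum_topSegment (h : ℕ) (k : ℤ) :
    2 * ∑ i ∈ topSegment h k, i = h * (2 * k + 3 - h) := by
  rw [topSegment, two_mul_sum_Ico (by lia)]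
  ring

theorem le_of_mem_sdiff_topSegment :
    ∀ y ∈ twoHoleInterval k x \ topSegment h k, ∀ z ∈ topSegment h k, y ≤ z := by
  simp only [mem_sdiff, mem_twoHoleInterval, topSegment, mem_Ico]
  lia

theorem IsStuck.le_of_add_two_notMem (hS : IsStuck (twoHoleInterval k x) S)
    (hxk : x + #S + 2 ≤ k) (hp : p = x - 1 ∨ p = x + 1) (hpS : p ∈ S) (hpS' : p + 2 ∉ S)
    (hy : y ∈ S) : y ≤ x + 1 := by
  have hp0 := (mem_twoHoleInterval.1 (hS.subset hpS)).1
  have hyA := mem_twoHoleInterval.1 (hS.subset hy)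
  by_contra! hlt
  have hup : Icc y (k + 1) ⊆ S := Icc_subset_of_succ_mem hy fun z hz _ _ =>
    hS.succ_mem hz (mem_twoHoleInterval.2 (by lia))
  have hdown : Icc (x + 4) y ⊆ S := Icc_subset_of_pred_mem hy fun z hz _ _ =>
    hS.pred_mem_of_add_two_notMem hpS (mem_twoHoleInterval.2 (by lia)) hpS' hz
      (mem_twoHoleInterval.2 (by lia)) (by lia) (by lia)
  have hsub : insert p (Icc (x + 4) (k + 1)) ⊆ S := by
    refine insert_subset hpS fun z hz => ?_
    obtain ⟨hz1, hz2⟩ := mem_Icc.1 hz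
    obtain hzy | hyz := le_total z y
    exacts [hdown (mem_Icc.2 ⟨hz1, hzy⟩), hup (mem_Icc.2 ⟨hyz, hz2⟩)]
  have hcard := card_le_card hsub
  rw [card_insert_of_notMem (by rw [mem_Icc]; lia), Int.card_Icc] at hcard
  lia

theorem IsStuck.eq_Ico_or_eq_insert_of_add_two_notMem (hS : IsStuck (twoHoleInterval k x) S)
    (hcard : 2 ≤ #S) (hxk : x + #S + 2 ≤ k) (hp : p = x - 1 ∨ p = x + 1) (hpS : p ∈ S)
    (hpS' : p + 2 ∉ S) : S = Ico 0 x ∨ S = insert (x + 1) (Ico 0 x) := by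
  have hle : ∀ y ∈ S, y ≤ x + 1 := fun y hy => hS.le_of_add_two_notMem hxk hp hpS hpS' hy
  have hA (y : ℤ) (hy : y ∈ S) := mem_twoHoleInterval.1 (hS.subset hy)
  obtain ⟨q, hq, hqp⟩ := exists_mem_ne hcard p
  have hq_ne : q ≠ p + 2 := fun heq => hpS' (heq ▸ hq)
  have hqA := hA q hq
  have hq_le := hle q hq
  have hdown : Icc 0 q ⊆ S := Icc_subset_of_pred_mem hq fun z hz _ _ =>
    hS.pred_mem_of_add_two_notMem hpS (mem_twoHoleInterval.2 (by lia)) hpS' hz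
      (mem_twoHoleInterval.2 (by lia)) (by lia) (by lia)
  have hup : Icc q (x - 1) ⊆ S := Icc_subset_of_succ_mem hq fun z hz _ _ =>
    hS.succ_mem hz (mem_twoHoleInterval.2 (by lia))
  have hIco : Ico 0 x ⊆ S := fun y hy => by
    obtain ⟨hy0, hyx⟩ := mem_Ico.1 hy
    obtain hyq | hqy := le_total y q
    exacts [hdown (mem_Icc.2 ⟨hy0, hyq⟩), hup (mem_Icc.2 ⟨hqy, by lia⟩)]
  have hinsert : S ⊆ insert (x + 1) (Ico 0 x) := fun y hy => by
    have hyA := hA y hy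
    have hy_le := hle y hy
    rw [mem_insert, mem_Ico]
    lia
  by_cases hx : x + 1 ∈ S
  · exact .inr (hinsert.antisymm (insert_subset hx hIco))
  · exact .inl (((subset_insert_iff_of_notMem hx).1 hinsert).antisymm hIco)

theorem IsStuck.eq_topSegment_of_add_two_mem (hS : IsStuck (twoHoleInterval k x) S)
    (hxk : x + #S + 2 ≤ k) (hjump : ∀ p, p = x - 1 ∨ p = x + 1 → p ∈ S → p + 2 ∈ S) :
    S = topSegment #S k := by
  have hA (y : ℤ) (hy : y ∈ S) := mem_twoHoleInterval.1 (hS.subset hy)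
  have hx3 : x + 3 ∉ S := fun hx => by
    have hup : Icc (x + 3) (k + 1) ⊆ S := Icc_subset_of_succ_mem hx fun z hz _ _ =>
      hS.succ_mem hz (mem_twoHoleInterval.2 (by have := hA z hz; lia))
    have hcard := card_le_card hup
    rw [Int.card_Icc] at hcard
    lia
  have hx1 : x + 1 ∉ S := fun hx => hx3 (by simpa [add_assoc] using hjump _ (.inr rfl) hx)
  have hx_pred : x - 1 ∉ S := fun hx => hx1 (by
    simpa [sub_add_eq_add_sub, add_sub_assoc] using hjump _ (.inl rfl) hx)
  have hlt : ∀ y ∈ S, x + 3 < y := fun y hy => by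
    have hyx : ¬ y ≤ x - 1 := fun hyx => hx_pred <| by
      refine Icc_subset_of_succ_mem hy (fun z hz _ _ => ?_) (right_mem_Icc.2 hyx)
      exact hS.succ_mem hz (mem_twoHoleInterval.2 (by have := hA z hz; lia))
    have hyA := hA y hy
    have hy1 : y ≠ x + 1 := ne_of_mem_of_not_mem hy hx1
    have hy3 : y ≠ x + 3 := ne_of_mem_of_not_mem hy hx3
    lia
  refine eq_Ico_sub_card_of_succ_mem (fun y hy => by have := hA y hy; lia) fun y hy hyk => ?_
  exact hS.succ_mem hy (mem_twoHoleInterval.2 (by have := hA y hy; have := hlt y hy; lia))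

theorem IsStuck.eq_topSegment_or_eq_Ico_or_eq_insert (hS : IsStuck (twoHoleInterval k x) S)
    (hcard : 2 ≤ #S) (hxk : x + #S + 2 ≤ k) :
    S = topSegment #S k ∨ S = Ico 0 x ∨ S = insert (x + 1) (Ico 0 x) := by
  by_cases hjump : ∀ p, p = x - 1 ∨ p = x + 1 → p ∈ S → p + 2 ∈ S
  · exact .inl (hS.eq_topSegment_of_add_two_mem hxk hjump)
  · push Not at hjump
    obtain ⟨p, hp, hpS, hpS'⟩ := hjump
    exact .inr (hS.eq_Ico_or_eq_insert_of_add_two_notMem hcard hxk hp hpS hpS')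

theorem card_insert_Ico_zero (x : ℤ) : #(insert (x + 1) (Ico 0 x)) = #(Ico 0 x) + 1 :=
  card_insert_of_notMem (by simp)

theorem card_restrictedSumset_twoHoleInterval_of_forall_le {M : Finset ℤ} (hh : 2 ≤ h)
    (hxk : x + h + 2 ≤ k) (hxh : x ≠ h) (hxh' : x ≠ h - 1) (hMA : M ⊆ twoHoleInterval k x)
    (hMh : #M = h) (hM : ∀ y ∈ M, ∀ z ∈ twoHoleInterval k x \ M, y ≤ z) :
    2 * (#(restrictedSumset h (twoHoleInterval k x)) : ℤ) =
      h * (2 * k + 3 - h) - 2 * ∑ i ∈ M, i + 2 := by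
  have hT := card_topSegment h k
  have hcard := card_restrictedSumset_of_isStuck_imp_eq hMA (hMh.trans hT.symm) hM
    le_of_mem_sdiff_topSegment fun S hS hSh => by
      rw [hT] at hSh
      obtain hST | rfl | rfl := hS.eq_topSegment_or_eq_Ico_or_eq_insert (by lia) (by lia)
      · rwa [hSh] at hST
      · rw [Int.card_Ico] at hSh
        lia
      · rw [card_insert_Ico_zero, Int.card_Ico] at hSh
        lia
  rw [hT] at hcard
  rw [hcard, ← two_mul_sum_topSegment]
  ring

theorem card_restrictedSumset_twoHoleInterval_of_eq_Ico_or_eq_insert {M : Finset ℤ} (hh : 2 ≤ h)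
    (hxk : x + h + 2 ≤ k) (hMx : M = Ico 0 x ∨ M = insert (x + 1) (Ico 0 x)) (hMh : #M = h) :
    2 * (#(restrictedSumset h (twoHoleInterval k x)) : ℤ) =
      h * (2 * k + 3 - h) - 2 * ∑ i ∈ M, i := by
  have hx : 0 < x := by
    obtain rfl | rfl := hMx
    · rw [Int.card_Ico] at hMh
      lia
    · rw [card_insert_Ico_zero, Int.card_Ico] at hMh
      lia
  have hMA : M ⊆ twoHoleInterval k x := fun y => by
    obtain rfl | rfl := hMx <;> simp only [mem_twoHoleInterval, mem_insert, mem_Ico] <;> lia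
  have hgap : ∀ y ∈ M, ∀ z ∈ twoHoleInterval k x \ M, y + 2 ≤ z := by
    obtain rfl | rfl := hMx <;>
      simp only [mem_sdiff, mem_twoHoleInterval, mem_insert, mem_Ico] <;> lia
  obtain ⟨p, hp, hpA⟩ : ∃ p ∈ M, p + 2 ∈ twoHoleInterval k x \ M := by
    obtain rfl | rfl := hMx
    · exact ⟨x - 1, by simp only [mem_sdiff, mem_twoHoleInterval, mem_Ico]; lia⟩
    · exact ⟨x + 1, by simp only [mem_sdiff, mem_twoHoleInterval, mem_insert, mem_Ico]; lia⟩
  have hT := card_topSegment h k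
  have hcard := card_restrictedSumset_of_isStuck_imp_eq_or_eq hMA (hMh.trans hT.symm) hgap
    le_of_mem_sdiff_topSegment hp hpA fun S hS hSh => by
      rw [hT] at hSh
      have hinsert := card_insert_Ico_zero x
      obtain hST | hSx := hS.eq_topSegment_or_eq_Ico_or_eq_insert (by lia) (by lia)
      · exact .inl (by rwa [hSh] at hST)
      right
      obtain rfl | rfl := hMx <;> obtain rfl | rfl := hSx <;> first | rfl | lia
  rw [hT] at hcard
  rw [hcard, ← two_mul_sum_topSegment]
  ring

theorem card_restrictedSumset_twoHoleInterval_of_le_sub_two (hx0 : 0 ≤ x) (hxh : x ≤ h - 2)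
    (hxk : x + h + 2 ≤ k) :
    (#(restrictedSumset h (twoHoleInterval k x)) : ℤ) = h * k - h ^ 2 + 2 * x + 2 := by
  have hsub : {x, x + 2} ⊆ Ico (0 : ℤ) (h + 2) := by
    simp only [insert_subset_iff, singleton_subset_iff, mem_Ico]
    lia
  have hpair : x ≠ x + 2 := by lia
  have hcard := card_restrictedSumset_twoHoleInterval_of_forall_le
    (M := Ico 0 (h + 2) \ {x, x + 2}) (by lia) hxk (by lia) (by lia)
    (sdiff_subset_sdiff (fun y => by rw [mem_Ico, mem_Icc]; lia) le_rfl)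
    (by rw [card_sdiff_of_subset hsub, card_pair hpair, Int.card_Ico]; lia)
    (by simp only [mem_twoHoleInterval, mem_sdiff, mem_Ico, mem_insert, mem_singleton]; lia)
  rw [sum_sdiff_eq_sub hsub, sum_pair hpair] at hcard
  have hsum := two_mul_sum_Ico (show (0 : ℤ) ≤ h + 2 by lia)
  linarith

theorem card_restrictedSumset_twoHoleInterval_of_eq_sub_one (hh : 2 ≤ h) (hxh : x = h - 1)
    (hxk : x + h + 2 ≤ k) :
    (#(restrictedSumset h (twoHoleInterval k x)) : ℤ) = h * k - h ^ 2 + 2 * h - 1 := by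
  have hcard := card_restrictedSumset_twoHoleInterval_of_eq_Ico_or_eq_insert hh hxk (.inr rfl)
    (by rw [card_insert_Ico_zero, Int.card_Ico]; lia)
  rw [sum_insert (by simp), mul_add, two_mul_sum_Ico (by lia), hxh] at hcard
  rw [hxh]
  linarith

theorem card_restrictedSumset_twoHoleInterval_of_eq (hh : 2 ≤ h) (hxh : x = h)
    (hxk : x + h + 2 ≤ k) :
    (#(restrictedSumset h (twoHoleInterval k x)) : ℤ) = h * k - h ^ 2 + 2 * h := by
  have hcard := card_restrictedSumset_twoHoleInterval_of_eq_Ico_or_eq_insert hh hxk (.inl rfl)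
    (by rw [Int.card_Ico]; lia)
  rw [two_mul_sum_Ico (by lia), hxh] at hcard
  rw [hxh]
  linarith

theorem card_restrictedSumset_twoHoleInterval_of_lt (hh : 2 ≤ h) (hxh : h < x)
    (hxk : x + h + 2 ≤ k) :
    (#(restrictedSumset h (twoHoleInterval k x)) : ℤ) = h * k - h ^ 2 + 2 * h + 1 := by
  have hcard := card_restrictedSumset_twoHoleInterval_of_forall_le (M := Ico 0 h) hh hxk
    (by lia) (by lia) (fun y => by simp only [mem_twoHoleInterval, mem_Ico]; lia) (by simp)
    (by simp only [mem_twoHoleInterval, mem_sdiff, mem_Ico]; lia)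
  rw [two_mul_sum_Ico (by lia)] at hcard
  linarith

end TwoHoleInterval

theorem stmt_11_general (h : ℕ) (k x : ℤ) (hh : 2 ≤ h) (hk : 2 * h + 2 ≤ k) :
    (x ∈ Icc 1 ((h : ℤ) - 2) →
      (#(restrictedSumset h (twoHoleInterval k x)) : ℤ) = h * k - h ^ 2 + 2 * x + 2) ∧
    (x ∈ Icc (k - h + 1) (k - 2) →
      (#(restrictedSumset h (twoHoleInterval k x)) : ℤ) = (h + 2) * k - h ^ 2 - 2 * x) ∧
    (x = h - 1 ∨ x = k - h →
      (#(restrictedSumset h (twoHoleInterval k x)) : ℤ) = h * k - h ^ 2 + 2 * h - 1) ∧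
    (x = h ∨ x = k - h - 1 →
      (#(restrictedSumset h (twoHoleInterval k x)) : ℤ) = h * k - h ^ 2 + 2 * h) ∧
    (x ∈ Icc ((h : ℤ) + 1) (k - h - 2) →
      (#(restrictedSumset h (twoHoleInterval k x)) : ℤ) = h * k - h ^ 2 + 2 * h + 1) := by
  have hreflect := card_restrictedSumset_twoHoleInterval_reflect h k x
  simp only [mem_Icc]
  refine ⟨fun hx => ?_, fun hx => ?_, ?_, ?_, fun hx => ?_⟩
  · exact card_restrictedSumset_twoHoleInterval_of_le_sub_two (by lia) (by lia) (by lia)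
  · rw [← hreflect, card_restrictedSumset_twoHoleInterval_of_le_sub_two (by lia) (by lia) (by lia)]
    ring
  · rintro (hx | hx)
    · exact card_restrictedSumset_twoHoleInterval_of_eq_sub_one hh hx (by lia)
    · rw [← hreflect]
      exact card_restrictedSumset_twoHoleInterval_of_eq_sub_one hh (by lia) (by lia)
  · rintro (hx | hx)
    · exact card_restrictedSumset_twoHoleInterval_of_eq hh hx (by lia)
    · rw [← hreflect]
      exact card_restrictedSumset_twoHoleInterval_of_eq hh (by lia) (by lia)
  · exact card_restrictedSumset_twoHoleInterval_of_lt hh (by lia) (by lia)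

theorem stmt_11 (h k : ℕ) (hh : 3 ≤ h) (hk : 3 * h + 3 ≤ k) (x : ℤ)
    (hx : x ∈ Finset.Icc (1 : ℤ) ((k : ℤ) - 2))
    (A : Finset ℤ) (hA : A = Finset.Icc (0 : ℤ) ((k : ℤ) + 1) \ {x, x + 2}) :
    (x ∈ Finset.Icc (1 : ℤ) ((h : ℤ) - 2) →
      ((restrictedSumset h A).card : ℤ) = (h : ℤ) * k - (h : ℤ) ^ 2 + 2 * x + 2) ∧
    (x ∈ Finset.Icc ((k : ℤ) - h + 1) ((k : ℤ) - 2) →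
      ((restrictedSumset h A).card : ℤ) = ((h : ℤ) + 2) * k - (h : ℤ) ^ 2 - 2 * x) ∧
    ((x = (h : ℤ) - 1 ∨ x = (k : ℤ) - h) →
      ((restrictedSumset h A).card : ℤ) = (h : ℤ) * k - (h : ℤ) ^ 2 + 2 * h - 1) ∧
    ((x = (h : ℤ) ∨ x = (k : ℤ) - h - 1) →
      ((restrictedSumset h A).card : ℤ) = (h : ℤ) * k - (h : ℤ) ^ 2 + 2 * h) ∧
    (x ∈ Finset.Icc ((h : ℤ) + 1) ((k : ℤ) - h - 2) →
      ((restrictedSumset h A).card : ℤ) = (h : ℤ) * k - (h : ℤ) ^ 2 + 2 * h + 1) := by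
  subst hA
  exact stmt_11_general h k x (by lia) (by lia)
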